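/- arXiv:2103.06040 — 3 statements merged into one kernel-verified Lean document; each statement's English description precedes it below -/
import Mathlib

section
/- Existence of a short vertex-restricted simplification: let P̃ be a polygonal curve in ℝ^d with vertices p̃_1,…,p̃_j, let ℓ ≥ 2, and suppose there exists a polygonal curve Q with at most ℓ vertices such that d_F(Q, P̃) ≤ Δ. Then there exists a subsequence of the vertices of P̃, starting with p̃_1 and ending with p̃_j and of length at most 2(ℓ−1), such that the polygonal curve P' through this subsequence satisfies d_F(P', P̃) ≤ 2Δ. -/
/-! Match `Q` to the polygonal curve `P` within `D > Δ`. The vertices of `P` matched to a given edge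
of `Q` form an interval of indices; keep the first and the last vertex of each of these intervals,
so at most two vertices per edge of `Q`. Two consecutive kept vertices either are adjacent on `P`,
and the segment between them lies on `P`, or are matched to the same edge of `Q`. In the second case
convexity of the norm puts the segment between them within `D` of a piece of that edge, hence within
`2D` of `P`. Gluing the pieces gives a curve within `2D` of `P`.

The infimum in the Fréchet distance need not be attained, so the vertices found in this way depend
on `D`; as there are only finitely many subsequences, one of them works for all `D > Δ`. -/

open Set

noncomputable section

/-- Points in `ℝ^d`. -/
abbrev Pt (d : ℕ) : Type := EuclideanSpace ℝ (Fin d)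

/-- A reparametrization: a continuous strictly increasing bijection of `[0,1]` onto itself. -/
def IsReparam (γ : ℝ → ℝ) : Prop :=
  ContinuousOn γ (Icc 0 1) ∧ StrictMonoOn γ (Icc 0 1) ∧ γ '' Icc 0 1 = Icc 0 1

/-- The Fréchet distance `d_F(P,Q) = inf_γ sup_{t ∈ [0,1]} ‖P(γ(t)) - Q(t)‖`
(only the values of the curves on `[0,1]` are relevant). -/
def frechetDist {d : ℕ} (P Q : ℝ → Pt d) : ℝ :=
  ⨅ γ : {γ : ℝ → ℝ // IsReparam γ}, ⨆ s : Icc (0:ℝ) 1, ‖P (γ.1 s.1) - Q s.1‖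

/-- The linearly parametrized line segment from `a` to `b`. -/
def seg {d : ℕ} (a b : Pt d) : ℝ → Pt d := fun s => (1 - s) • a + s • b

/-- The subcurve `P[a,b]` of `P`, linearly reparametrized over `[0,1]`. -/
def subcurve {d : ℕ} (P : ℝ → Pt d) (a b : ℝ) : ℝ → Pt d := fun s => P (a + s * (b - a))

/-- The polygonal curve with vertex sequence `pts 0, …, pts n`, uniformly
parametrized over `[0,1]`. -/
def polyline {d n : ℕ} (pts : Fin (n + 1) → Pt d) : ℝ → Pt d := fun s =>
  if h : n = 0 then pts 0
  else
    let i : ℕ := min ⌊s * n⌋₊ (n - 1)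
    have hi : i < n := lt_of_le_of_lt (min_le_right _ _) (by omega)
    (1 - (s * n - i)) • pts ⟨i, hi.trans n.lt_succ_self⟩ +
      (s * n - i) • pts ⟨i + 1, Nat.succ_lt_succ hi⟩

/-- `f ∈ 𝕏^d_ℓ`: `f` is a polygonal curve with at most `ℓ` vertices. -/
def IsPolygonal {d : ℕ} (f : ℝ → Pt d) (ℓ : ℕ) : Prop :=
  ∃ n : ℕ, n + 1 ≤ ℓ ∧ ∃ pts : Fin (n + 1) → Pt d, f = polyline pts

/-- Concatenation of two curves (each parametrized over `[0,1]`). -/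
def concat {d : ℕ} (f g : ℝ → Pt d) : ℝ → Pt d := fun s =>
  if s ≤ 1 / 2 then f (2 * s) else g (2 * s - 1)

/-- `CostLE P m t C Δ` states that the clustering cost satisfies `φ(P,C) ≤ Δ`:
there is a family `I` of index pairs `(i,j)`, `1 ≤ i < j ≤ m`, with
`⋃_{(i,j) ∈ I} [t i, t j] = [0,1]`, such that every corresponding subcurve is
within Fréchet distance `Δ` of some center in `C`. -/
def CostLE {d : ℕ} (P : ℝ → Pt d) (m : ℕ) (t : ℕ → ℝ) (C : Set (ℝ → Pt d)) (Δ : ℝ) : Prop :=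
  ∃ I : Set (ℕ × ℕ),
    (∀ q ∈ I, 1 ≤ q.1 ∧ q.1 < q.2 ∧ q.2 ≤ m) ∧
    (⋃ q ∈ I, Icc (t q.1) (t q.2)) = Icc (0:ℝ) 1 ∧
    ∀ q ∈ I, ∃ c ∈ C, frechetDist (subcurve P (t q.1) (t q.2)) c ≤ Δ

/-- The set `r_Q` of the set system `R` (ground set `{1,…,m−1}`):
`r_Q = {z : ∃ i ≤ z < j, d_F(Q, P[t_i,t_j]) ≤ Δ}`. -/
def rSet {d : ℕ} (P : ℝ → Pt d) (m : ℕ) (t : ℕ → ℝ) (Δ : ℝ) (Q : ℝ → Pt d) : Set ℕ :=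
  {z | 1 ≤ z ∧ z < m ∧ ∃ i j, 1 ≤ i ∧ i ≤ z ∧ z < j ∧ j ≤ m ∧
    frechetDist Q (subcurve P (t i) (t j)) ≤ Δ}

open AffineMap

/-! ### Polygonal curves -/

section PolygonalCurve

/-- The parameter `k / n` of the vertex of index `k` on a uniformly parametrized polygonal curve
with `n` edges (for `n = 0` it is `0`). -/
def knot {n : ℕ} (k : Fin (n + 1)) : ℝ := k / n

variable {n : ℕ}

lemma knot_zero : knot (0 : Fin (n + 1)) = 0 := by simp [knot]

lemma knot_last (hn : n ≠ 0) : knot (Fin.last n) = 1 := by simp [knot, hn]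

lemma strictMono_knot (hn : n ≠ 0) : StrictMono (knot (n := n)) := fun k l hkl => by
  have hn : (0 : ℝ) < n := by positivity
  have hkl : (k : ℝ) < l := by exact_mod_cast hkl
  exact div_lt_div_of_pos_right hkl hn

lemma knot_mem_Icc (k : Fin (n + 1)) : knot k ∈ Icc (0 : ℝ) 1 :=
  ⟨by unfold knot; positivity, div_le_one_of_le₀ (by exact_mod_cast k.is_le) n.cast_nonneg⟩

lemma mem_Icc_knot_iff {i : Fin n} {s : ℝ} :
    s ∈ Icc (knot i.castSucc) (knot i.succ) ↔ s * n ∈ Icc (i : ℝ) (i + 1) := by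
  have hn : (0 : ℝ) < n := by exact_mod_cast i.pos
  simp only [knot, mem_Icc, div_le_iff₀ hn, le_div_iff₀ hn, Fin.val_castSucc, Fin.val_succ,
    Nat.cast_succ]

lemma exists_mem_Ico_castSucc_succ {α : Type*} [LinearOrder α] {u : Fin (n + 1) → α} {s : α}
    (hs : s ∈ Ico (u 0) (u (Fin.last n))) : ∃ i : Fin n, s ∈ Ico (u i.castSucc) (u i.succ) := by
  by_contra! h
  have hle : ∀ i, u i ≤ s :=
    Fin.induction hs.1 fun i hi => le_of_not_gt fun hlt => h i ⟨hi, hlt⟩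
  exact hs.2.not_ge (hle _)

lemma exists_mem_Icc_castSucc_succ {α : Type*} [LinearOrder α] (hn : n ≠ 0) {u : Fin (n + 1) → α}
    (hu : Monotone u) {s : α} (hs : s ∈ Icc (u 0) (u (Fin.last n))) :
    ∃ i : Fin n, s ∈ Icc (u i.castSucc) (u i.succ) := by
  rcases hs.2.lt_or_eq with hlt | rfl
  · exact (exists_mem_Ico_castSucc_succ ⟨hs.1, hlt⟩).imp fun _ hi => Ico_subset_Icc_self hi
  · obtain ⟨m, rfl⟩ := Nat.exists_eq_succ_of_ne_zero hn
    exact ⟨Fin.last m, hu (Fin.le_last _), le_rfl⟩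

lemma exists_mem_Icc_knot (hn : n ≠ 0) {s : ℝ} (hs : s ∈ Icc (0 : ℝ) 1) :
    ∃ i : Fin n, s ∈ Icc (knot i.castSucc) (knot i.succ) :=
  exists_mem_Icc_castSucc_succ hn (strictMono_knot hn).monotone (by rwa [knot_zero, knot_last hn])

variable {E : Type*} [AddCommGroup E] [Module ℝ E]

/-- The polygonal curve with vertices `pts 0, …, pts n` in a real vector space, uniformly
parametrized over `[0,1]`: the counterpart of `polyline` outside `ℝ^d`. -/
def polygonalCurve (pts : Fin (n + 1) → E) (s : ℝ) : E :=
  if h : n = 0 then pts 0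
  else
    let i : Fin n := ⟨min ⌊s * n⌋₊ (n - 1), by omega⟩
    lineMap (pts i.castSucc) (pts i.succ) (s * n - i)

lemma polyline_eq_polygonalCurve {d : ℕ} (pts : Fin (n + 1) → Pt d) :
    polyline pts = polygonalCurve pts := by
  funext s
  simp only [polyline, polygonalCurve, lineMap_apply_module]
  rfl

lemma polygonalCurve_eq_lineMap_of_floor (pts : Fin (n + 1) → E) {s : ℝ} (i : Fin n)
    (hi : min ⌊s * n⌋₊ (n - 1) = i) :
    polygonalCurve pts s = lineMap (pts i.castSucc) (pts i.succ) (s * n - i) := by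
  have hn : n ≠ 0 := i.pos.ne'
  simp only [polygonalCurve, dif_neg hn, hi]

lemma polygonalCurve_eq_lineMap (pts : Fin (n + 1) → E) {s : ℝ} {i : Fin n}
    (hs : s ∈ Icc (knot i.castSucc) (knot i.succ)) :
    polygonalCurve pts s = lineMap (pts i.castSucc) (pts i.succ) (s * n - i) := by
  obtain ⟨his, hsi⟩ := mem_Icc_knot_iff.1 hs
  rcases hsi.lt_or_eq with hlt | heq
  · have hfloor : ⌊s * n⌋₊ = i := (Nat.floor_eq_iff (i.val.cast_nonneg.trans his)).2 ⟨his, hlt⟩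
    exact polygonalCurve_eq_lineMap_of_floor pts i (by omega)
  · have hfloor : ⌊s * n⌋₊ = i + 1 := by rw [heq]; exact_mod_cast Nat.floor_natCast (R := ℝ) (i + 1)
    by_cases hin : (i : ℕ) + 1 = n
    · exact polygonalCurve_eq_lineMap_of_floor pts i (by omega)
    · rw [polygonalCurve_eq_lineMap_of_floor pts ⟨i + 1, by omega⟩ (by simp only; omega), heq]
      simp only [Nat.cast_succ, sub_self, lineMap_apply_zero, add_sub_cancel_left,
        lineMap_apply_one]
      rfl

lemma polygonalCurve_knot (hn : n ≠ 0) (pts : Fin (n + 1) → E) (k : Fin (n + 1)) :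
    polygonalCurve pts (knot k) = pts k := by
  have hmul (l : Fin (n + 1)) : knot l * n = l := div_mul_cancel₀ _ (by exact_mod_cast hn)
  obtain ⟨i, hi⟩ := exists_mem_Icc_knot hn (knot_mem_Icc k)
  rw [polygonalCurve_eq_lineMap pts hi]
  rcases eq_or_ne k i.castSucc with rfl | hk
  · simp [hmul]
  · have hk : k = i.succ :=
      le_antisymm ((strictMono_knot hn).le_iff_le.1 hi.2) <| Fin.castSucc_lt_iff_succ_le.1 <|
        ((strictMono_knot hn).le_iff_le.1 hi.1).lt_of_ne' hk
    simp [hk, hmul]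

lemma polygonalCurve_lineMap (pts : Fin (n + 1) → E) {i : Fin n} {a b x : ℝ}
    (ha : a ∈ Icc (knot i.castSucc) (knot i.succ)) (hb : b ∈ Icc (knot i.castSucc) (knot i.succ))
    (hx : x ∈ Icc (0 : ℝ) 1) :
    polygonalCurve pts (lineMap a b x)
      = lineMap (polygonalCurve pts a) (polygonalCurve pts b) x := by
  rw [polygonalCurve_eq_lineMap pts ((convex_Icc _ _).lineMap_mem ha hb hx),
    polygonalCurve_eq_lineMap pts ha, polygonalCurve_eq_lineMap pts hb]
  simp only [lineMap_apply_module, smul_eq_mul]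
  module

lemma polygonalCurve_const (p : E) : polygonalCurve (fun _ : Fin (n + 1) => p) = fun _ => p := by
  funext s
  simp [polygonalCurve]

lemma polygonalCurve_mem_convexHull (pts : Fin (n + 1) → E) {s : ℝ} (hs : s ∈ Icc (0 : ℝ) 1) :
    polygonalCurve pts s ∈ convexHull ℝ (range pts) := by
  have hpts (k) : pts k ∈ convexHull ℝ (range pts) := subset_convexHull ℝ _ (mem_range_self k)
  rcases eq_or_ne n 0 with rfl | hn
  · simpa [polygonalCurve] using hpts 0
  · obtain ⟨i, hi⟩ := exists_mem_Icc_knot hn hs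
    obtain ⟨his, hsi⟩ := mem_Icc_knot_iff.1 hi
    rw [polygonalCurve_eq_lineMap pts hi]
    exact (convex_convexHull ℝ _).lineMap_mem (hpts _) (hpts _) ⟨by linarith, by linarith⟩

lemma exists_ne_zero_polygonalCurve_eq (pts : Fin (n + 1) → E) :
    ∃ m ≠ 0, m ≤ max n 1 ∧ ∃ pts' : Fin (m + 1) → E, polygonalCurve pts' = polygonalCurve pts := by
  rcases eq_or_ne n 0 with rfl | hn
  · refine ⟨1, one_ne_zero, le_max_right 0 1, fun _ => pts 0, ?_⟩
    rw [polygonalCurve_const, ← polygonalCurve_const (n := 0)]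
    congr 1
    exact funext fun k => congrArg pts (Fin.fin_one_eq_zero k).symm
  · exact ⟨n, hn, le_max_left n 1, pts, rfl⟩

end PolygonalCurve

/-! ### The Fréchet distance -/

section FrechetDist

variable {M : Type*} [PseudoMetricSpace M] {P Q : ℝ → M} {D : ℝ}

lemma IsReparam.mapsTo {γ : ℝ → ℝ} (hγ : IsReparam γ) : MapsTo γ (Icc 0 1) (Icc 0 1) :=
  mapsTo_iff_image_subset.2 hγ.2.2.subset

lemma isReparam_id : IsReparam id := ⟨continuousOn_id, strictMonoOn_id, image_id _⟩

/-- Some reparametrization keeps `P` within `D` of `Q` throughout. It yields the upper bound `D`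
for the Fréchet distance, in any metric space. -/
def MatchedWithin (D : ℝ) (P Q : ℝ → M) : Prop :=
  ∃ γ, IsReparam γ ∧ ∀ s ∈ Icc (0 : ℝ) 1, dist (P (γ s)) (Q s) ≤ D

/-- The Fréchet distance of `P` and `Q` is at most `δ`, in any metric space. The infimum over the
reparametrizations need not be attained, which is why all `D > δ` occur. -/
def FrechetDistLE (δ : ℝ) (P Q : ℝ → M) : Prop :=
  ∀ D > δ, MatchedWithin D P Q

lemma MatchedWithin.mono {D' : ℝ} (h : MatchedWithin D P Q) (hD : D ≤ D') :
    MatchedWithin D' P Q := by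
  obtain ⟨γ, hγ, hdist⟩ := h
  exact ⟨γ, hγ, fun s hs => (hdist s hs).trans hD⟩

lemma MatchedWithin.nonneg (h : MatchedWithin D P Q) : 0 ≤ D := by
  obtain ⟨γ, -, hdist⟩ := h
  exact dist_nonneg.trans (hdist 0 (left_mem_Icc.2 zero_le_one))

lemma FrechetDistLE.nonneg {δ : ℝ} (h : FrechetDistLE δ P Q) : 0 ≤ δ :=
  le_of_forall_gt_imp_ge_of_dense fun D hD => (h D hD).nonneg

lemma matchedWithin_refl (P : ℝ → M) (hD : 0 ≤ D) : MatchedWithin D P P :=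
  ⟨id, isReparam_id, fun _ _ => (dist_self _).trans_le hD⟩

variable {d : ℕ}

lemma MatchedWithin.frechetDist_le {P Q : ℝ → Pt d} (h : MatchedWithin D P Q) :
    frechetDist P Q ≤ D := by
  obtain ⟨γ, hγ, hdist⟩ := h
  have : Nonempty (Icc (0 : ℝ) 1) := ⟨0, left_mem_Icc.2 zero_le_one⟩
  have hbdd : BddBelow (range fun γ : {γ : ℝ → ℝ // IsReparam γ} =>
      ⨆ s : Icc (0 : ℝ) 1, ‖P (γ.1 s) - Q s‖) :=
    ⟨0, forall_mem_range.2 fun _ => Real.iSup_nonneg fun _ => norm_nonneg _⟩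
  refine (ciInf_le hbdd ⟨γ, hγ⟩).trans (ciSup_le fun s => ?_)
  simpa only [dist_eq_norm] using hdist s s.2

-- The supremum in `frechetDist` is the junk value `0` when the distances are unbounded.
lemma matchedWithin_of_frechetDist_lt {P Q : ℝ → Pt d}
    (hP : Bornology.IsBounded (P '' Icc 0 1)) (hQ : Bornology.IsBounded (Q '' Icc 0 1))
    (h : frechetDist P Q < D) : MatchedWithin D P Q := by
  have : Nonempty {γ : ℝ → ℝ // IsReparam γ} := ⟨⟨id, isReparam_id⟩⟩
  obtain ⟨⟨γ, hγ⟩, hlt⟩ := exists_lt_of_ciInf_lt h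
  obtain ⟨B, hB⟩ := (hP.sub hQ).exists_norm_le
  have hbdd : BddAbove (range fun s : Icc (0 : ℝ) 1 => ‖P (γ s) - Q s‖) :=
    ⟨B, forall_mem_range.2 fun s => hB _ <| sub_mem_sub
      (mem_image_of_mem P (hγ.mapsTo s.2)) (mem_image_of_mem Q s.2)⟩
  refine ⟨γ, hγ, fun s hs => ?_⟩
  rw [dist_eq_norm]
  exact (le_ciSup hbdd ⟨s, hs⟩).trans hlt.le

lemma isBounded_polygonalCurve_image {E : Type*} [SeminormedAddCommGroup E] [NormedSpace ℝ E]
    {n : ℕ} (pts : Fin (n + 1) → E) : Bornology.IsBounded (polygonalCurve pts '' Icc 0 1) :=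
  (isBounded_convexHull.2 (finite_range pts).isBounded).subset <|
    image_subset_iff.2 fun _ hs => polygonalCurve_mem_convexHull pts hs

lemma frechetDist_polyline_le_iff {m n : ℕ} {ps : Fin (m + 1) → Pt d} {qs : Fin (n + 1) → Pt d}
    {δ : ℝ} : frechetDist (polyline ps) (polyline qs) ≤ δ ↔
      FrechetDistLE δ (polygonalCurve ps) (polygonalCurve qs) := by
  rw [polyline_eq_polygonalCurve, polyline_eq_polygonalCurve]
  exact ⟨fun h D hD => matchedWithin_of_frechetDist_lt (isBounded_polygonalCurve_image ps)
      (isBounded_polygonalCurve_image qs) (h.trans_lt hD),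
    fun h => le_of_forall_gt_imp_ge_of_dense fun D hD => (h D hD).frechetDist_le⟩

end FrechetDist

/-! ### Ramps and their gluing -/

section Ramp

/-- The restriction of `g` to `[a,b]`, rescaled to run from `0` to `1` and extended by constants to
the real line. -/
def ramp (g : ℝ → ℝ) (a b s : ℝ) : ℝ := (g (max a (min b s)) - g a) / (g b - g a)

variable {g : ℝ → ℝ} {a b s : ℝ}

lemma max_min_mem_Icc (hab : a ≤ b) (s : ℝ) : max a (min b s) ∈ Icc a b :=
  ⟨le_max_left _ _, max_le hab (min_le_left _ _)⟩

lemma ramp_of_mem_Icc (hs : s ∈ Icc a b) : ramp g a b s = (g s - g a) / (g b - g a) := by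
  rw [ramp, min_eq_right hs.2, max_eq_right hs.1]

lemma ramp_of_le_left (hs : s ≤ a) : ramp g a b s = 0 := by
  rw [ramp, max_eq_left ((min_le_right b s).trans hs), sub_self, zero_div]

lemma ramp_of_right_le (hab : a < b) (hg : StrictMonoOn g (Icc a b)) (hs : b ≤ s) :
    ramp g a b s = 1 := by
  have hgab := hg (left_mem_Icc.2 hab.le) (right_mem_Icc.2 hab.le) hab
  rw [ramp, min_eq_left hs, max_eq_right hab.le, div_self (sub_pos.2 hgab).ne']

lemma lineMap_ramp (hg : StrictMonoOn g (Icc a b)) (hs : s ∈ Icc a b) :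
    lineMap (g a) (g b) (ramp g a b s) = g s := by
  rcases (hs.1.trans hs.2).eq_or_lt with rfl | hab
  · simp [le_antisymm hs.2 hs.1]
  · have hgab := hg (left_mem_Icc.2 hab.le) (right_mem_Icc.2 hab.le) hab
    rw [ramp_of_mem_Icc hs, lineMap_apply_ring', div_mul_cancel₀ _ (sub_pos.2 hgab).ne',
      sub_add_cancel]

lemma continuous_ramp (hab : a ≤ b) (hg : ContinuousOn g (Icc a b)) : Continuous (ramp g a b) :=
  ((hg.comp_continuous (by fun_prop) (max_min_mem_Icc hab)).sub continuous_const).div_const _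

lemma strictMonoOn_ramp (hg : StrictMonoOn g (Icc a b)) :
    StrictMonoOn (ramp g a b) (Icc a b) := fun s hs t ht hst => by
  have hab : a < b := hs.1.trans_lt (hst.trans_le ht.2)
  have hgab := hg (left_mem_Icc.2 hab.le) (right_mem_Icc.2 hab.le) hab
  rw [ramp_of_mem_Icc hs, ramp_of_mem_Icc ht]
  exact div_lt_div_of_pos_right (sub_lt_sub_right (hg hs ht hst) _) (sub_pos.2 hgab)

lemma monotone_ramp (hab : a ≤ b) (hg : StrictMonoOn g (Icc a b)) : Monotone (ramp g a b) :=
  fun s t hst => by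
  have hgab := hg.monotoneOn (left_mem_Icc.2 hab) (right_mem_Icc.2 hab) hab
  have hgst := hg.monotoneOn (max_min_mem_Icc hab s) (max_min_mem_Icc hab t)
    (max_le_max_left a (min_le_min_left b hst))
  exact div_le_div_of_nonneg_right (sub_le_sub_right hgst _) (sub_nonneg.2 hgab)

lemma ramp_mem_Icc (hab : a < b) (hg : StrictMonoOn g (Icc a b)) (s : ℝ) :
    ramp g a b s ∈ Icc (0 : ℝ) 1 :=
  ⟨ramp_of_le_left (min_le_right s a) ▸ monotone_ramp hab.le hg (min_le_left s a),
    ramp_of_right_le hab hg (le_max_right s b) ▸ monotone_ramp hab.le hg (le_max_left s b)⟩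

variable {r : ℕ}

/-- The average of the ramps of `g i` over the pieces `[u i, u (i+1)]`. On the `i`-th piece the
earlier ramps are `1` and the later ones `0`, so it maps that piece to `[i/r, (i+1)/r]` the way
`g i` does, up to scaling. -/
def gluedRamps (u : Fin (r + 1) → ℝ) (g : Fin r → ℝ → ℝ) (s : ℝ) : ℝ :=
  (∑ i, ramp (g i) (u i.castSucc) (u i.succ) s) / r

variable {u : Fin (r + 1) → ℝ} {g : Fin r → ℝ → ℝ}

lemma gluedRamps_mul (hu : StrictMono u)
    (hg : ∀ i, StrictMonoOn (g i) (Icc (u i.castSucc) (u i.succ))) {i : Fin r}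
    (hs : s ∈ Icc (u i.castSucc) (u i.succ)) :
    gluedRamps u g s * r = i + ramp (g i) (u i.castSucc) (u i.succ) s := by
  have hr : (r : ℝ) ≠ 0 := by exact_mod_cast i.pos.ne'
  have hterm (l : Fin r) : ramp (g l) (u l.castSucc) (u l.succ) s =
      (if l < i then 1 else 0) + if l = i then ramp (g i) (u i.castSucc) (u i.succ) s else 0 := by
    rcases lt_trichotomy l i with hl | rfl | hl
    · have hle : u l.succ ≤ s := (hu.monotone (Fin.succ_le_castSucc_iff.2 hl)).trans hs.1
      simp [hl, hl.ne, ramp_of_right_le (hu l.castSucc_lt_succ) (hg l) hle]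
    · simp
    · have hle : s ≤ u l.castSucc := hs.2.trans (hu.monotone (Fin.succ_le_castSucc_iff.2 hl))
      simp [hl.not_gt, hl.ne', ramp_of_le_left hle]
  rw [gluedRamps, div_mul_cancel₀ _ hr, Finset.sum_congr rfl fun l _ => hterm l]
  simp only [Finset.sum_add_distrib, Finset.sum_ite_eq', Finset.mem_univ, if_true,
    Finset.sum_boole, Finset.filter_gt_eq_Iio, Fin.card_Iio]

lemma continuous_gluedRamps (hu : StrictMono u)
    (hg : ∀ i, ContinuousOn (g i) (Icc (u i.castSucc) (u i.succ))) :
    Continuous (gluedRamps u g) :=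
  (continuous_finsetSum _ fun i _ =>
    continuous_ramp (hu i.castSucc_lt_succ).le (hg i)).div_const _

lemma strictMonoOn_gluedRamps (hu : StrictMono u)
    (hg : ∀ i, StrictMonoOn (g i) (Icc (u i.castSucc) (u i.succ))) :
    StrictMonoOn (gluedRamps u g) (Icc (u 0) (u (Fin.last r))) := by
  intro s hs t ht hst
  obtain ⟨i, hi⟩ := exists_mem_Ico_castSucc_succ ⟨hs.1, hst.trans_le ht.2⟩
  have hr : (0 : ℝ) < r := by exact_mod_cast i.pos
  have hmono (l : Fin r) : Monotone (ramp (g l) (u l.castSucc) (u l.succ)) :=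
    monotone_ramp (hu l.castSucc_lt_succ).le (hg l)
  have hst' : s < min t (u i.succ) := lt_min hst hi.2
  have hstrict : ramp (g i) (u i.castSucc) (u i.succ) s < ramp (g i) (u i.castSucc) (u i.succ) t :=
    (strictMonoOn_ramp (hg i) ⟨hi.1, hi.2.le⟩ ⟨hi.1.trans hst'.le, min_le_right _ _⟩ hst').trans_le
      (hmono i (min_le_left _ _))
  exact div_lt_div_of_pos_right
    (Finset.sum_lt_sum (fun l _ => hmono l hst.le) ⟨i, Finset.mem_univ i, hstrict⟩) hr

lemma isReparam_gluedRamps (hu : StrictMono u) (hu0 : u 0 = 0) (hu1 : u (Fin.last r) = 1)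
    (hgc : ∀ i, ContinuousOn (g i) (Icc (u i.castSucc) (u i.succ)))
    (hgm : ∀ i, StrictMonoOn (g i) (Icc (u i.castSucc) (u i.succ))) :
    IsReparam (gluedRamps u g) := by
  have hr : r ≠ 0 := by
    rintro rfl
    exact zero_ne_one (hu0.symm.trans hu1)
  have hcont := (continuous_gluedRamps hu hgc).continuousOn (s := Icc 0 1)
  have hmono : StrictMonoOn (gluedRamps u g) (Icc 0 1) := by
    simpa only [hu0, hu1] using strictMonoOn_gluedRamps hu hgm
  have h0 : gluedRamps u g 0 = 0 := by
    have hzero (i : Fin r) : ramp (g i) (u i.castSucc) (u i.succ) 0 = 0 :=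
      ramp_of_le_left (hu0 ▸ hu.monotone (Fin.zero_le _))
    simp [gluedRamps, hzero]
  have h1 : gluedRamps u g 1 = 1 := by
    have hone (i : Fin r) : ramp (g i) (u i.castSucc) (u i.succ) 1 = 1 :=
      ramp_of_right_le (hu i.castSucc_lt_succ) (hgm i) (hu1 ▸ hu.monotone (Fin.le_last _))
    simp [gluedRamps, hone, hr]
  exact ⟨hcont, hmono,
    by rw [hcont.image_Icc_of_monotoneOn zero_le_one hmono.monotoneOn, h0, h1]⟩

end Ramp

/-! ### Selecting vertices -/

section Selection

/-- `e` lists the indices of a subsequence of the vertices `0, …, j` of a polygonal curve that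
starts with the first and ends with the last vertex. -/
def IsVertexSubsequence {r j : ℕ} (e : Fin (r + 1) → Fin (j + 1)) : Prop :=
  StrictMono e ∧ e 0 = 0 ∧ e (Fin.last r) = Fin.last j

variable {α : Type*} [LinearOrder α] [Finite α]

lemma exists_endpoints [Nonempty α] (A : Set α) :
    ∃ a b, ∀ v ∈ A, a ∈ A ∧ b ∈ A ∧ v ∈ Icc a b := by
  rcases A.eq_empty_or_nonempty with rfl | hA
  · exact ⟨Classical.arbitrary α, Classical.arbitrary α, fun _ hv => hv.elim⟩
  · obtain ⟨a, ha, hmin⟩ := A.exists_min_image id A.toFinite hA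
    obtain ⟨b, hb, hmax⟩ := A.exists_max_image id A.toFinite hA
    exact ⟨a, b, fun v hv => ⟨ha, hb, hmin v hv, hmax v hv⟩⟩

lemma exists_finset_covBy_or_mem_ordConnected [BoundedOrder α] {ι : Type*} [Fintype ι]
    {A : ι → Set α} (hA : ∀ k, (A k).OrdConnected) (hcov : ∀ v, ∃ k, v ∈ A k) :
    ∃ S : Finset α, S.card ≤ 2 * Fintype.card ι ∧ ⊥ ∈ S ∧ ⊤ ∈ S ∧
      ∀ v w, v < w → (∀ x ∈ S, x ≤ v ∨ w ≤ x) → v ⋖ w ∨ ∃ k, v ∈ A k ∧ w ∈ A k := by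
  classical
  choose a b hab using fun k => exists_endpoints (A k)
  refine ⟨Finset.univ.image a ∪ Finset.univ.image b, ?_, ?_, ?_, fun v w hvw hgap => ?_⟩
  · calc (Finset.univ.image a ∪ Finset.univ.image b).card
        ≤ (Finset.univ.image a).card + (Finset.univ.image b).card := Finset.card_union_le _ _
      _ ≤ Fintype.card ι + Fintype.card ι :=
        add_le_add Finset.card_image_le Finset.card_image_le
      _ = 2 * Fintype.card ι := (two_mul _).symm
  · obtain ⟨k, hk⟩ := hcov ⊥
    have : a k = ⊥ := le_bot_iff.1 (hab k _ hk).2.2.1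
    simp [← this]
  · obtain ⟨k, hk⟩ := hcov ⊤
    have : b k = ⊤ := top_le_iff.1 (hab k _ hk).2.2.2
    simp [← this]
  · rw [or_iff_not_imp_left, not_covBy_iff_exists_mem_Ioo hvw]
    rintro ⟨x, hvx, hxw⟩
    obtain ⟨k, hk⟩ := hcov x
    obtain ⟨hak, hbk, hax, hxb⟩ := hab k x hk
    have hav : a k ≤ v := (hgap (a k) (by simp)).resolve_right (hax.trans_lt hxw).not_ge
    have hwb : w ≤ b k := (hgap (b k) (by simp)).resolve_left (hvx.trans_le hxb).not_ge
    exact ⟨k, (hA k).out hak hk ⟨hav, hvx.le⟩, (hA k).out hk hbk ⟨hxw.le, hwb⟩⟩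

lemma exists_isVertexSubsequence_range_eq {j : ℕ} {S : Finset (Fin (j + 1))} (h0 : 0 ∈ S)
    (hlast : Fin.last j ∈ S) :
    ∃ (r : ℕ) (e : Fin (r + 1) → Fin (j + 1)),
      IsVertexSubsequence e ∧ r + 1 = S.card ∧ range e = S := by
  obtain ⟨r, hr⟩ := Nat.exists_eq_add_one.2 (Finset.card_pos.2 ⟨0, h0⟩)
  have hrange : range (S.orderEmbOfFin hr) = S := S.range_orderEmbOfFin hr
  refine ⟨r, S.orderEmbOfFin hr, ⟨(S.orderEmbOfFin hr).strictMono, ?_, ?_⟩, hr.symm, hrange⟩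
  · obtain ⟨i, hi⟩ : 0 ∈ range (S.orderEmbOfFin hr) := hrange ▸ h0
    exact Fin.le_zero_iff.1 (hi ▸ (S.orderEmbOfFin hr).monotone (Fin.zero_le i))
  · obtain ⟨i, hi⟩ : Fin.last j ∈ range (S.orderEmbOfFin hr) := hrange ▸ hlast
    exact Fin.last_le_iff.1 (hi ▸ (S.orderEmbOfFin hr).monotone (Fin.le_last i))

lemma exists_isVertexSubsequence_covBy_or_mem {n j : ℕ} {A : Fin n → Set (Fin (j + 1))}
    (hA : ∀ k, (A k).OrdConnected) (hcov : ∀ v, ∃ k, v ∈ A k) :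
    ∃ (r : ℕ) (e : Fin (r + 1) → Fin (j + 1)), IsVertexSubsequence e ∧ r + 1 ≤ 2 * n ∧
      ∀ i : Fin r, e i.castSucc ⋖ e i.succ ∨ ∃ k, e i.castSucc ∈ A k ∧ e i.succ ∈ A k := by
  obtain ⟨S, hcard, hbot, htop, hS⟩ := exists_finset_covBy_or_mem_ordConnected hA hcov
  obtain ⟨r, e, he, hr, hrange⟩ := exists_isVertexSubsequence_range_eq hbot htop
  refine ⟨r, e, he, by simpa [hr] using hcard,
    fun i => hS _ _ (he.1 i.castSucc_lt_succ) fun x hx => ?_⟩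
  obtain ⟨l, rfl⟩ : x ∈ range e := hrange ▸ hx
  rcases le_or_gt l i.castSucc with hl | hl
  · exact Or.inl (he.1.monotone hl)
  · exact Or.inr (he.1.monotone (Fin.castSucc_lt_iff_succ_le.1 hl))

end Selection

/-! ### Shortcuts -/

section Shortcut

variable {E : Type*} [SeminormedAddCommGroup E] [NormedSpace ℝ E] {D : ℝ}

lemma dist_lineMap_lineMap_le {p p' q q' : E} (hp : dist p q ≤ D) (hp' : dist p' q' ≤ D) {x : ℝ}
    (hx : x ∈ Icc (0 : ℝ) 1) : dist (lineMap p p' x) (lineMap q q' x) ≤ D := by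
  rw [dist_eq_norm, ← mem_closedBall_zero_iff] at hp hp' ⊢
  convert (convex_closedBall (0 : E) D).lineMap_mem hp hp' hx using 1
  simp only [lineMap_apply_module]
  module

-- If `R ∘ g` stays within `D` of `P` and `R` is affine, then the chord of `P` is within `D` of the
-- chord of `R`, which is matched to `P` by `g`.
lemma dist_lineMap_ramp_le {P R : ℝ → E} {g : ℝ → ℝ} {a b s : ℝ} (hg : StrictMonoOn g (Icc a b))
    (hR : ∀ x ∈ Icc (0 : ℝ) 1, R (lineMap (g a) (g b) x) = lineMap (R (g a)) (R (g b)) x)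
    (hdist : ∀ t ∈ Icc a b, dist (R (g t)) (P t) ≤ D) (hab : a < b) (hs : s ∈ Icc a b) :
    dist (lineMap (P a) (P b) (ramp g a b s)) (P s) ≤ 2 * D := by
  have hx : ramp g a b s ∈ Icc (0 : ℝ) 1 := ramp_mem_Icc hab hg s
  have hchord : R (g s) = lineMap (R (g a)) (R (g b)) (ramp g a b s) := by
    rw [← hR _ hx, lineMap_ramp hg hs]
  calc dist (lineMap (P a) (P b) (ramp g a b s)) (P s)
      ≤ dist (lineMap (P a) (P b) (ramp g a b s)) (R (g s)) + dist (R (g s)) (P s) :=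
        dist_triangle _ _ _
    _ ≤ D + D := by
        refine add_le_add ?_ (hdist s hs)
        rw [hchord]
        refine dist_lineMap_lineMap_le ?_ ?_ hx <;> rw [dist_comm]
        exacts [hdist a (left_mem_Icc.2 hab.le), hdist b (right_mem_Icc.2 hab.le)]
    _ = 2 * D := (two_mul D).symm

lemma exists_reparam_dist_shortcut_le {n j : ℕ} {qs : Fin (n + 1) → E} {pt : Fin (j + 1) → E}
    {γ : ℝ → ℝ} (hγ : IsReparam γ)
    (hdist : ∀ s ∈ Icc (0 : ℝ) 1, dist (polygonalCurve qs (γ s)) (polygonalCurve pt s) ≤ D)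
    {v w : Fin (j + 1)} (hvw : v < w)
    (hedge : v ⋖ w ∨ ∃ k : Fin n, γ (knot v) ∈ Icc (knot k.castSucc) (knot k.succ) ∧
      γ (knot w) ∈ Icc (knot k.castSucc) (knot k.succ)) :
    ∃ g, IsReparam g ∧ ∀ s ∈ Icc (knot v) (knot w),
      dist (lineMap (pt v) (pt w) (ramp g (knot v) (knot w) s)) (polygonalCurve pt s)
        ≤ 2 * D := by
  have hj : j ≠ 0 := by omega
  have hknot : knot v < knot w := strictMono_knot hj hvw
  have hsub : Icc (knot v) (knot w) ⊆ Icc 0 1 :=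
    Icc_subset_Icc (knot_mem_Icc v).1 (knot_mem_Icc w).2
  simp only [← polygonalCurve_knot hj pt]
  rcases hedge with hcov | ⟨k, hvk, hwk⟩
  · obtain ⟨i, rfl, rfl⟩ : ∃ i : Fin j, v = i.castSucc ∧ w = i.succ := by
      have := Nat.covBy_iff_add_one_eq.1 (Fin.covBy_iff.1 hcov)
      exact ⟨⟨v, by omega⟩, rfl, Fin.ext this.symm⟩
    have hD : 0 ≤ D := dist_nonneg.trans (hdist 0 (left_mem_Icc.2 zero_le_one))
    exact ⟨id, isReparam_id, fun s hs => dist_lineMap_ramp_le strictMonoOn_id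
      (fun x => polygonalCurve_lineMap pt (left_mem_Icc.2 hknot.le) (right_mem_Icc.2 hknot.le))
      (fun _ _ => (dist_self _).trans_le hD) hknot hs⟩
  · exact ⟨γ, hγ, fun s hs => dist_lineMap_ramp_le (hγ.2.1.mono hsub)
      (fun x => polygonalCurve_lineMap qs hvk hwk) (fun t ht => hdist t (hsub ht)) hknot hs⟩

lemma matchedWithin_polygonalCurve_of_ramps {r : ℕ} {pts : Fin (r + 1) → E} {P : ℝ → E}
    {u : Fin (r + 1) → ℝ} {g : Fin r → ℝ → ℝ} (hu : StrictMono u) (hu0 : u 0 = 0)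
    (hu1 : u (Fin.last r) = 1)
    (hgc : ∀ i, ContinuousOn (g i) (Icc (u i.castSucc) (u i.succ)))
    (hgm : ∀ i, StrictMonoOn (g i) (Icc (u i.castSucc) (u i.succ)))
    (hdist : ∀ i : Fin r, ∀ s ∈ Icc (u i.castSucc) (u i.succ),
      dist (lineMap (pts i.castSucc) (pts i.succ) (ramp (g i) (u i.castSucc) (u i.succ) s)) (P s)
        ≤ D) :
    MatchedWithin D (polygonalCurve pts) P := by
  have hr : r ≠ 0 := by
    rintro rfl
    exact zero_ne_one (hu0.symm.trans hu1)
  refine ⟨gluedRamps u g, isReparam_gluedRamps hu hu0 hu1 hgc hgm, fun s hs => ?_⟩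
  obtain ⟨i, hi⟩ := exists_mem_Icc_castSucc_succ hr hu.monotone (s := s) (by rwa [hu0, hu1])
  have hglue := gluedRamps_mul hu hgm hi
  have hramp := ramp_mem_Icc (hu i.castSucc_lt_succ) (hgm i) s
  have hmem : gluedRamps u g s ∈ Icc (knot i.castSucc) (knot i.succ) := by
    rw [mem_Icc_knot_iff, hglue]
    exact ⟨le_add_of_nonneg_right hramp.1, by gcongr; exact hramp.2⟩
  rw [polygonalCurve_eq_lineMap pts hmem, hglue, add_sub_cancel_left]
  exact hdist i s hi

theorem MatchedWithin.exists_isVertexSubsequence {n j : ℕ} (hn : n ≠ 0) (hj : j ≠ 0)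
    {qs : Fin (n + 1) → E} {pt : Fin (j + 1) → E}
    (h : MatchedWithin D (polygonalCurve qs) (polygonalCurve pt)) :
    ∃ (r : ℕ) (e : Fin (r + 1) → Fin (j + 1)), IsVertexSubsequence e ∧ r + 1 ≤ 2 * n ∧
      MatchedWithin (2 * D) (polygonalCurve (pt ∘ e)) (polygonalCurve pt) := by
  obtain ⟨γ, hγ, hdist⟩ := h
  have hmono : Monotone fun v : Fin (j + 1) => γ (knot v) := fun v w hvw =>
    hγ.2.1.monotoneOn (knot_mem_Icc v) (knot_mem_Icc w) ((strictMono_knot hj).monotone hvw)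
  obtain ⟨r, e, he, hr, hedge⟩ := exists_isVertexSubsequence_covBy_or_mem
    (A := fun k : Fin n => (fun v => γ (knot v)) ⁻¹' Icc (knot k.castSucc) (knot k.succ))
    (fun k => ordConnected_Icc.preimage_mono hmono)
    (fun v => exists_mem_Icc_knot hn (hγ.mapsTo (knot_mem_Icc v)))
  choose g hg hgdist using fun i : Fin r =>
    exists_reparam_dist_shortcut_le hγ hdist (he.1 i.castSucc_lt_succ) (hedge i)
  have hsub (i : Fin r) : Icc (knot (e i.castSucc)) (knot (e i.succ)) ⊆ Icc 0 1 :=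
    Icc_subset_Icc (knot_mem_Icc _).1 (knot_mem_Icc _).2
  exact ⟨r, e, he, hr, matchedWithin_polygonalCurve_of_ramps (u := knot ∘ e)
    ((strictMono_knot hj).comp he.1)
    (by rw [Function.comp_apply, he.2.1, knot_zero])
    (by rw [Function.comp_apply, he.2.2, knot_last hj])
    (fun i => (hg i).1.mono (hsub i)) (fun i => (hg i).2.1.mono (hsub i)) hgdist⟩

end Shortcut

lemma exists_forall_gt_of_forall_gt_exists {ι β : Type*} [Finite ι] [LinearOrder β] [NoMaxOrder β]
    {p : ι → β → Prop} (hp : ∀ i, Monotone (p i)) {c : β} (h : ∀ x > c, ∃ i, p i x) :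
    ∃ i, ∀ x > c, p i x := by
  by_contra! hfail
  choose x hxc hx using hfail
  obtain ⟨y, hy⟩ := exists_gt c
  have : Nonempty ι := (h y hy).nonempty
  obtain ⟨i₀, hmin⟩ := Finite.exists_min x
  obtain ⟨i, hi⟩ := h (x i₀) (hxc i₀)
  exact hx i (hp i (hmin i) hi)

theorem stmt11_general {E : Type*} [SeminormedAddCommGroup E] [NormedSpace ℝ E] {Δ : ℝ} {ℓ : ℕ}
    (hℓ : 2 ≤ ℓ) {n : ℕ} (hn : n + 1 ≤ ℓ) (qs : Fin (n + 1) → E) {j : ℕ} (pt : Fin (j + 1) → E)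
    (hQ : FrechetDistLE Δ (polygonalCurve qs) (polygonalCurve pt)) :
    ∃ (r : ℕ) (e : Fin (r + 1) → Fin (j + 1)), IsVertexSubsequence e ∧ r + 1 ≤ 2 * (ℓ - 1) ∧
      FrechetDistLE (2 * Δ) (polygonalCurve (pt ∘ e)) (polygonalCurve pt) := by
  rcases eq_or_ne j 0 with rfl | hj
  · exact ⟨0, id, ⟨strictMono_id, rfl, rfl⟩, by omega,
      fun D hD => matchedWithin_refl _ ((mul_nonneg zero_le_two hQ.nonneg).trans hD.le)⟩
  obtain ⟨m, hm, hmn, qs', hqs⟩ := exists_ne_zero_polygonalCurve_eq qs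
  rw [← hqs] at hQ
  let Candidate :=
    {x : Σ r : Fin (2 * (ℓ - 1)), Fin (r + 1) → Fin (j + 1) // IsVertexSubsequence x.2}
  obtain ⟨⟨⟨r, e⟩, he⟩, hF⟩ := exists_forall_gt_of_forall_gt_exists (c := 2 * Δ)
    (p := fun (x : Candidate) D =>
      MatchedWithin D (polygonalCurve (pt ∘ x.1.2)) (polygonalCurve pt))
    (fun _ _ _ hD h => h.mono hD) fun D hD => by
      obtain ⟨r, e, he, hr, h⟩ :=
        (hQ (D / 2) (by linarith)).exists_isVertexSubsequence hm hj
      exact ⟨⟨⟨⟨r, by omega⟩, e⟩, he⟩, by simpa [mul_div_cancel₀] using h⟩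
  exact ⟨r, e, he, r.isLt, hF⟩

/-- Existence of a short vertex-restricted simplification: if some
curve with at most `ℓ` vertices is within Fréchet distance `Δ` of the polygonal curve
with vertices `pt 0, …, pt j`, then some subsequence of the vertices, starting at the
first and ending at the last vertex, of length at most `2(ℓ-1)`, spans a polygonal
curve within Fréchet distance `2Δ` of it. -/
theorem stmt11 {d : ℕ} (Δ : ℝ) (hΔ : 0 < Δ) (ℓ : ℕ) (hℓ : 2 ≤ ℓ)
    (j : ℕ) (pt : Fin (j + 1) → Pt d)
    (hQ : ∃ Q, IsPolygonal Q ℓ ∧ frechetDist Q (polyline pt) ≤ Δ) :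
    ∃ (r : ℕ) (e : Fin (r + 1) → Fin (j + 1)),
      StrictMono e ∧ e 0 = 0 ∧ e (Fin.last r) = Fin.last j ∧
      r + 1 ≤ 2 * (ℓ - 1) ∧
      frechetDist (polyline (pt ∘ e)) (polyline pt) ≤ 2 * Δ := by
  obtain ⟨_, ⟨n, hn, qs, rfl⟩, hQ⟩ := hQ
  simpa only [frechetDist_polyline_le_iff, IsVertexSubsequence, and_assoc] using
    stmt11_general hℓ hn qs pt (frechetDist_polyline_le_iff.1 hQ)
end
end

section
/- Structural main result: if there exists a set C* ⊆ X^d_ℓ of size k with φ(P,C*) ≤ Δ, then there exists a set C ⊆ X^d_{2ℓ} of size at most k, consisting of curves from { σ^+(i,j) : 1 ≤ i < j ≤ m }, such that φ(P,C) ≤ 14Δ. -/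
/-!
On bounded curves the Fréchet distance is a pseudometric. For each center `c` of the given solution
choose one index pair `(i, j)` with `P[t_i, t_j]` within `Δ` of `c`, and replace `c` by `σ⁺(i, j)`;
this simplification is defined because `c` itself witnesses that `P[t_i, t_j]` is `Δ`-close to a
curve with at most `ℓ` vertices. Every other subcurve served by `c` is within
`Δ + Δ + 4Δ = 6Δ ≤ 14Δ` of `σ⁺(i, j)`, via `c` and `P[t_i, t_j]`, so the same cover works.
-/

open Set

noncomputable section

/-- The proxy curve `κ_z(x,y) = σ⁻(x,z) ⊕ σ∘(z,z+1) ⊕ σ⁺(z+1,y)`. -/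
def kappa {d : ℕ} (σm : ℕ → ℕ → ℝ → Pt d) (σo : ℕ → ℝ → Pt d)
    (σp : ℕ → ℕ → ℝ → Pt d) (z x y : ℕ) : ℝ → Pt d :=
  concat (σm x z) (concat (σo z) (σp (z + 1) y))

/-- The set `r_{i,j}` of the set system `R̃₃`. -/
def rTilde3 {d : ℕ} (P : ℝ → Pt d) (m : ℕ) (t : ℕ → ℝ) (Δ : ℝ)
    (σm : ℕ → ℕ → ℝ → Pt d) (σo : ℕ → ℝ → Pt d) (σp : ℕ → ℕ → ℝ → Pt d)
    (xz ynext : ℕ → ℕ) (i j : ℕ) : Set ℕ :=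
  {z | 1 ≤ z ∧ z < m ∧ ∃ x y, xz z ≤ x ∧ x ≤ z ∧ z + 1 ≤ y ∧ y ≤ ynext z ∧
    frechetDist (kappa σm σo σp z x y) (σp i j) ≤ 10 * Δ}

section

open Bornology Function

lemma strictMonoOn_invFunOn {α β : Type*} [LinearOrder α] [Nonempty α] [Preorder β] {f : α → β}
    {s : Set α} (hf : StrictMonoOn f s) : StrictMonoOn (invFunOn f s) (f '' s) := by
  rintro _ ⟨x, hx, rfl⟩ _ ⟨y, hy, rfl⟩ hxy
  rw [hf.injOn.leftInvOn_invFunOn hx, hf.injOn.leftInvOn_invFunOn hy]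
  exact (hf.lt_iff_lt hx hy).1 hxy

namespace IsReparam

lemma of_strictMonoOn {γ : ℝ → ℝ} (hmono : StrictMonoOn γ (Icc 0 1))
    (himage : γ '' Icc 0 1 = Icc 0 1) : IsReparam γ := by
  refine ⟨?_, hmono, himage⟩
  -- A strictly monotone map onto an interval is an order isomorphism, hence continuous.
  have : OrdConnected (γ '' Icc 0 1) := by
    rw [himage]
    exact ordConnected_Icc
  rw [continuousOn_iff_continuous_domRestrict]
  exact continuous_subtype_val.comp (hmono.orderIso γ (Icc 0 1)).continuous

lemma bijOn {γ : ℝ → ℝ} (hγ : IsReparam γ) : BijOn γ (Icc 0 1) (Icc 0 1) :=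
  BijOn.mk (mapsTo_iff_image_subset.2 hγ.2.2.subset) hγ.2.1.injOn hγ.2.2.superset

protected lemma id : IsReparam id :=
  ⟨continuousOn_id, strictMonoOn_id, image_id _⟩

lemma comp {γ δ : ℝ → ℝ} (hγ : IsReparam γ) (hδ : IsReparam δ) : IsReparam (γ ∘ δ) :=
  ⟨hγ.1.comp hδ.1 hδ.bijOn.mapsTo, hγ.2.1.comp hδ.2.1 hδ.bijOn.mapsTo,
    (hγ.bijOn.comp hδ.bijOn).image_eq⟩

lemma invFunOn {γ : ℝ → ℝ} (hγ : IsReparam γ) : IsReparam (invFunOn γ (Icc 0 1)) :=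
  of_strictMonoOn (by simpa only [hγ.2.2] using strictMonoOn_invFunOn hγ.2.1)
    (hγ.bijOn.symm hγ.bijOn.invOn_invFunOn.symm).image_eq

end IsReparam

variable {d : ℕ} {f g h : ℝ → Pt d}

lemma bddBelow_range_iSup_norm_sub (f g : ℝ → Pt d) :
    BddBelow (range fun γ : {γ : ℝ → ℝ // IsReparam γ} =>
      ⨆ s : Icc (0 : ℝ) 1, ‖f (γ.1 s.1) - g s.1‖) :=
  ⟨0, forall_mem_range.2 fun _ => Real.iSup_nonneg fun _ => norm_nonneg _⟩

lemma frechetDist_le_of_reparam {r : ℝ} {γ : ℝ → ℝ} (hγ : IsReparam γ)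
    (hr : ∀ s ∈ Icc (0 : ℝ) 1, ‖f (γ s) - g s‖ ≤ r) : frechetDist f g ≤ r :=
  (ciInf_le (bddBelow_range_iSup_norm_sub f g) ⟨γ, hγ⟩).trans (ciSup_le fun s => hr s.1 s.2)

/-- Boundedness is essential: the supremum of an unbounded set of reals is the junk value `0`. -/
lemma exists_reparam_of_frechetDist_lt (hf : IsBounded (f '' Icc (0 : ℝ) 1))
    (hg : IsBounded (g '' Icc (0 : ℝ) 1)) {r : ℝ} (hr : frechetDist f g < r) :
    ∃ γ, IsReparam γ ∧ ∀ s ∈ Icc (0 : ℝ) 1, ‖f (γ s) - g s‖ ≤ r := by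
  have : Nonempty {γ : ℝ → ℝ // IsReparam γ} := ⟨⟨id, IsReparam.id⟩⟩
  obtain ⟨⟨γ, hγ⟩, hlt⟩ := exists_lt_of_ciInf_lt hr
  obtain ⟨A, hA⟩ := hf.exists_norm_le
  obtain ⟨B, hB⟩ := hg.exists_norm_le
  have hbdd : BddAbove (range fun s : Icc (0 : ℝ) 1 => ‖f (γ s.1) - g s.1‖) :=
    ⟨A + B, forall_mem_range.2 fun s => norm_sub_le_of_le
      (hA _ (mem_image_of_mem f (hγ.bijOn.mapsTo s.2))) (hB _ (mem_image_of_mem g s.2))⟩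
  exact ⟨γ, hγ, fun s hs => (le_ciSup hbdd ⟨s, hs⟩).trans hlt.le⟩

lemma iSup_norm_sub_invFunOn (f g : ℝ → Pt d) {γ : ℝ → ℝ} (hγ : IsReparam γ) :
    ⨆ s : Icc (0 : ℝ) 1, ‖g (invFunOn γ (Icc 0 1) s) - f s‖ =
      ⨆ s : Icc (0 : ℝ) 1, ‖f (γ s) - g s‖ := by
  refine (Surjective.iSup_congr (hγ.bijOn.mapsTo.restrict γ _ _)
    (hγ.bijOn.mapsTo.restrict_surjective_iff.2 hγ.bijOn.surjOn) fun s => ?_).symm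
  rw [MapsTo.val_restrict_apply, hγ.2.1.injOn.leftInvOn_invFunOn s.2, norm_sub_rev]

lemma frechetDist_comm (f g : ℝ → Pt d) : frechetDist f g = frechetDist g f := by
  have : Nonempty {γ : ℝ → ℝ // IsReparam γ} := ⟨⟨id, IsReparam.id⟩⟩
  have hle : ∀ f g : ℝ → Pt d, frechetDist g f ≤ frechetDist f g := fun f g =>
    le_ciInf fun ⟨_, hγ⟩ => (ciInf_le (bddBelow_range_iSup_norm_sub g f) ⟨_, hγ.invFunOn⟩).trans_eq
      (iSup_norm_sub_invFunOn f g hγ)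
  exact le_antisymm (hle g f) (hle f g)

lemma frechetDist_triangle (hf : IsBounded (f '' Icc (0 : ℝ) 1))
    (hg : IsBounded (g '' Icc (0 : ℝ) 1)) (hh : IsBounded (h '' Icc (0 : ℝ) 1)) :
    frechetDist f h ≤ frechetDist f g + frechetDist g h := by
  refine le_of_forall_pos_le_add fun ε hε => ?_
  obtain ⟨γ, hγ, hfg⟩ := exists_reparam_of_frechetDist_lt hf hg
    (lt_add_of_pos_right (frechetDist f g) (half_pos hε))
  obtain ⟨δ, hδ, hgh⟩ := exists_reparam_of_frechetDist_lt hg hh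
    (lt_add_of_pos_right (frechetDist g h) (half_pos hε))
  refine frechetDist_le_of_reparam (hγ.comp hδ) fun s hs => ?_
  calc ‖f (γ (δ s)) - h s‖
      ≤ ‖f (γ (δ s)) - g (δ s)‖ + ‖g (δ s) - h s‖ := norm_sub_le_norm_sub_add_norm_sub _ _ _
    _ ≤ (frechetDist f g + ε / 2) + (frechetDist g h + ε / 2) :=
      add_le_add (hfg _ (hδ.bijOn.mapsTo hs)) (hgh s hs)
    _ = frechetDist f g + frechetDist g h + ε := by ring

lemma polyline_mem_convexHull {n : ℕ} (pts : Fin (n + 1) → Pt d) {s : ℝ} (hs : s ∈ Icc (0 : ℝ) 1) :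
    polyline pts s ∈ convexHull ℝ (range pts) := by
  have hvertex : ∀ i, pts i ∈ convexHull ℝ (range pts) := fun i =>
    subset_convexHull ℝ _ (mem_range_self i)
  unfold polyline
  split_ifs with hn
  · exact hvertex 0
  · set i : ℕ := min ⌊s * n⌋₊ (n - 1) with hi
    have hlower : (i : ℝ) ≤ s * n :=
      (Nat.cast_le.2 (min_le_left _ _)).trans (Nat.floor_le (mul_nonneg hs.1 n.cast_nonneg))
    have hupper : s * n ≤ i + 1 := by
      rcases min_choice ⌊s * n⌋₊ (n - 1) with hfloor | hlast
      · rw [hi, hfloor]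
        exact (Nat.lt_floor_add_one _).le
      · rw [hi, hlast, Nat.cast_pred (Nat.pos_of_ne_zero hn), sub_add_cancel]
        exact mul_le_of_le_one_left n.cast_nonneg hs.2
    exact convex_convexHull ℝ _ (hvertex _) (hvertex _) (by linarith) (by linarith)
      (sub_add_cancel _ _)

lemma IsPolygonal.isBounded_image {ℓ : ℕ} (hf : IsPolygonal f ℓ) :
    IsBounded (f '' Icc (0 : ℝ) 1) := by
  obtain ⟨n, -, pts, rfl⟩ := hf
  exact (isBounded_convexHull.2 (finite_range pts).isBounded).subset
    (image_subset_iff.2 fun _ hs => polyline_mem_convexHull pts hs)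

lemma isBounded_image_subcurve {P : ℝ → Pt d} (hP : IsBounded (P '' Icc (0 : ℝ) 1)) {a b : ℝ}
    (ha : a ∈ Icc (0 : ℝ) 1) (hb : b ∈ Icc (0 : ℝ) 1) :
    IsBounded (subcurve P a b '' Icc (0 : ℝ) 1) :=
  hP.subset <| image_subset_iff.2 fun _ hs =>
    mem_image_of_mem P ((convex_Icc 0 1).add_smul_sub_mem ha hb hs)

/-- The center `c` serves the index pair `q = (i, j)`, `1 ≤ i < j ≤ m`, within `r`: a clustering of
cost at most `r` may assign `P[t_i, t_j]` to `c`. -/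
def Serves (P : ℝ → Pt d) (m : ℕ) (t : ℕ → ℝ) (r : ℝ) (c : ℝ → Pt d) (q : ℕ × ℕ) : Prop :=
  (1 ≤ q.1 ∧ q.1 < q.2 ∧ q.2 ≤ m) ∧ frechetDist (subcurve P (t q.1) (t q.2)) c ≤ r

namespace CostLE

variable {P : ℝ → Pt d} {m : ℕ} {t : ℕ → ℝ} {C C' : Set (ℝ → Pt d)} {r r' : ℝ}

lemma exists_serves (hC : CostLE P m t C r) : ∃ c ∈ C, ∃ q, Serves P m t r c q := by
  obtain ⟨I, hI, hcover, hclose⟩ := hC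
  have hzero : (0 : ℝ) ∈ ⋃ q ∈ I, Icc (t q.1) (t q.2) := hcover ▸ left_mem_Icc.2 zero_le_one
  obtain ⟨q, hq, -⟩ := mem_iUnion₂.1 hzero
  obtain ⟨c, hc, hqc⟩ := hclose q hq
  exact ⟨c, hc, q, hI q hq, hqc⟩

lemma of_forall_serves (hC : CostLE P m t C r)
    (h : ∀ c ∈ C, ∀ q, Serves P m t r c q → ∃ c' ∈ C', Serves P m t r' c' q) :
    CostLE P m t C' r' := by
  obtain ⟨I, hI, hcover, hclose⟩ := hC
  refine ⟨I, hI, hcover, fun q hq => ?_⟩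
  obtain ⟨c, hc, hqc⟩ := hclose q hq
  obtain ⟨c', hc', -, hqc'⟩ := h c hc q ⟨hI q hq, hqc⟩
  exact ⟨c', hc', hqc'⟩

lemma mono (hC : CostLE P m t C r) (hr : r ≤ r') : CostLE P m t C r' :=
  hC.of_forall_serves fun c hc _ hq => ⟨c, hc, hq.1, hq.2.trans hr⟩

lemma exists_representative (hC : CostLE P m t C r) {c : ℝ → Pt d} (hc : c ∈ C) :
    ∃ p, (∃ c' ∈ C, Serves P m t r c' p) ∧ ∀ q, Serves P m t r c q → Serves P m t r c p := by
  by_cases hserves : ∃ p, Serves P m t r c p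
  · obtain ⟨p, hp⟩ := hserves
    exact ⟨p, ⟨c, hc, hp⟩, fun _ _ => hp⟩
  · -- A center that serves no pair still needs one, so it takes a pair of another center.
    obtain ⟨c', hc', p, hp⟩ := hC.exists_serves
    exact ⟨p, ⟨c', hc', hp⟩, fun q hq => (hserves ⟨q, hq⟩).elim⟩

end CostLE

theorem stmt14_general {ι : Type*} {P : ℝ → Pt d} (hP : IsBounded (P '' Icc (0 : ℝ) 1))
    {m : ℕ} {t : ℕ → ℝ} (ht : ∀ i ∈ Icc 1 m, t i ∈ Icc (0 : ℝ) 1) {r ρ : ℝ}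
    {X Y : Set (ℝ → Pt d)} (hX : ∀ f ∈ X, IsBounded (f '' Icc (0 : ℝ) 1))
    (hY : ∀ f ∈ Y, IsBounded (f '' Icc (0 : ℝ) 1)) {σ : ℕ → ℕ → ℝ → Pt d}
    (hσ : ∀ i j, 1 ≤ i → i < j → j ≤ m →
      (∃ Q ∈ X, frechetDist Q (subcurve P (t i) (t j)) ≤ r) →
      σ i j ∈ Y ∧ frechetDist (σ i j) (subcurve P (t i) (t j)) ≤ ρ)
    {C : ι → ℝ → Pt d} (hCX : ∀ s, C s ∈ X) (hC : CostLE P m t {f | ∃ s, f = C s} r) :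
    ∃ ij : ι → ℕ × ℕ,
      (∀ s, 1 ≤ (ij s).1 ∧ (ij s).1 < (ij s).2 ∧ (ij s).2 ≤ m) ∧
      (∀ s, σ (ij s).1 (ij s).2 ∈ Y) ∧
      CostLE P m t {f | ∃ s, f = σ (ij s).1 (ij s).2} (2 * r + ρ) := by
  choose ij hserved hrep using fun s => hC.exists_representative ⟨s, rfl⟩
  have hσY : ∀ s, σ (ij s).1 (ij s).2 ∈ Y ∧
      frechetDist (σ (ij s).1 (ij s).2) (subcurve P (t (ij s).1) (t (ij s).2)) ≤ ρ := fun s => by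
    obtain ⟨_, ⟨s', rfl⟩, ⟨hi, hij, hj⟩, hdist⟩ := hserved s
    exact hσ _ _ hi hij hj ⟨C s', hCX s', frechetDist_comm _ _ ▸ hdist⟩
  have hsub : ∀ c q, Serves P m t r c q →
      IsBounded (subcurve P (t q.1) (t q.2) '' Icc (0 : ℝ) 1) := fun _ _ ⟨⟨hi, hij, hj⟩, _⟩ =>
    isBounded_image_subcurve hP (ht _ ⟨hi, hij.le.trans hj⟩) (ht _ ⟨hi.trans hij.le, hj⟩)
  refine ⟨ij, fun s => (hserved s).elim fun _ h => h.2.1, fun s => (hσY s).1,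
    hC.of_forall_serves ?_⟩
  rintro _ ⟨s, rfl⟩ q hq
  refine ⟨_, ⟨s, rfl⟩, hq.1, ?_⟩
  have hp := hrep s q hq
  calc frechetDist (subcurve P (t q.1) (t q.2)) (σ (ij s).1 (ij s).2)
      ≤ frechetDist (subcurve P (t q.1) (t q.2)) (C s) +
          (frechetDist (C s) (subcurve P (t (ij s).1) (t (ij s).2)) +
            frechetDist (subcurve P (t (ij s).1) (t (ij s).2)) (σ (ij s).1 (ij s).2)) :=
        (frechetDist_triangle (hsub _ q hq) (hX _ (hCX s)) (hY _ (hσY s).1)).trans <|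
          add_le_add_right (frechetDist_triangle (hX _ (hCX s)) (hsub _ _ hp) (hY _ (hσY s).1)) _
    _ ≤ r + (r + ρ) := by
        rw [frechetDist_comm (C s), frechetDist_comm _ (σ _ _)]
        exact add_le_add hq.2 (add_le_add hp.2 (hσY s).2)
    _ = 2 * r + ρ := by ring

end

/-- Structural main result: if there is `C* ⊆ 𝕏^d_ℓ` of size `k` with
`φ(P,C*) ≤ Δ`, then there is `C ⊆ 𝕏^d_{2ℓ}` of size at most `k`, consisting of curves
`σ⁺(i,j)`, `1 ≤ i < j ≤ m`, with `φ(P,C) ≤ 14Δ`. -/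
theorem stmt14 {d ℓ : ℕ} (P : ℝ → Pt d) (hP : ContinuousOn P (Icc 0 1))
    (m : ℕ) (hm : 2 ≤ m) (t : ℕ → ℝ) (ht0 : t 1 = 0) (ht1 : t m = 1)
    (htmono : ∀ i, 1 ≤ i → i < m → t i < t (i + 1))
    (Δ : ℝ) (hΔ : 0 < Δ)
    (Dm Dp : ℕ → ℕ → Prop) (Do : ℕ → Prop)
    (σm σp : ℕ → ℕ → ℝ → Pt d) (σo : ℕ → ℝ → Pt d)
    (hσm : ∀ x z, 1 ≤ x → x ≤ z → z ≤ m → Dm x z →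
      IsPolygonal (σm x z) (2 * ℓ) ∧
      frechetDist (σm x z) (subcurve P (t x) (t z)) ≤ 4 * Δ ∧ σm x z 1 = P (t z))
    (hσmBot : ∀ x z, 1 ≤ x → x ≤ z → z ≤ m → ¬ Dm x z →
      ¬ ∃ Q, IsPolygonal Q ℓ ∧ frechetDist Q (subcurve P (t x) (t z)) ≤ Δ)
    (hσmMono : ∀ x x' z, x ≤ x' → x' ≤ z → Dm x z → Dm x' z)
    (hσo : ∀ z, 1 ≤ z → z + 1 ≤ m → Do z →
      IsPolygonal (σo z) (2 * ℓ) ∧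
      frechetDist (σo z) (subcurve P (t z) (t (z+1))) ≤ 4 * Δ ∧
      σo z 0 = P (t z) ∧ σo z 1 = P (t (z+1)))
    (hσoBot : ∀ z, 1 ≤ z → z + 1 ≤ m → ¬ Do z →
      ¬ ∃ Q, IsPolygonal Q ℓ ∧ frechetDist Q (subcurve P (t z) (t (z+1))) ≤ Δ)
    (hσp : ∀ i j, 1 ≤ i → i ≤ j → j ≤ m → Dp i j →
      IsPolygonal (σp i j) (2 * ℓ) ∧
      frechetDist (σp i j) (subcurve P (t i) (t j)) ≤ 4 * Δ ∧ σp i j 0 = P (t i))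
    (hσpBot : ∀ i j, 1 ≤ i → i ≤ j → j ≤ m → ¬ Dp i j →
      ¬ ∃ Q, IsPolygonal Q ℓ ∧ frechetDist Q (subcurve P (t i) (t j)) ≤ Δ)
    (hσpMono : ∀ i j j', i ≤ j' → j' ≤ j → Dp i j → Dp i j')
    (xz ynext : ℕ → ℕ)
    (hxz : ∀ z, 1 ≤ z → z < m →
      IsLeast {x | 1 ≤ x ∧ x ≤ z ∧ ∀ x', x ≤ x' → x' ≤ z → Dm x' z} (xz z))
    (hynext : ∀ z, 1 ≤ z → z < m →
      IsGreatest {y | z + 1 ≤ y ∧ y ≤ m ∧ ∀ y', z + 1 ≤ y' → y' ≤ y → Dp (z+1) y'}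
        (ynext z))
    (k : ℕ) (Cstar : Fin k → ℝ → Pt d)
    (hCpoly : ∀ s, IsPolygonal (Cstar s) ℓ)
    (hCcost : CostLE P m t {f | ∃ s, f = Cstar s} Δ) :
    ∃ ij : Fin k → ℕ × ℕ,
      (∀ s, 1 ≤ (ij s).1 ∧ (ij s).1 < (ij s).2 ∧ (ij s).2 ≤ m) ∧
      (∀ s, IsPolygonal (σp (ij s).1 (ij s).2) (2 * ℓ)) ∧
      CostLE P m t {f | ∃ s, f = σp (ij s).1 (ij s).2} (14 * Δ) := by
  have ht : MonotoneOn t (Icc 1 m) := monotoneOn_of_le_add_one ordConnected_Icc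
    fun i _ hi hi' => (htmono i hi.1 hi'.2).le
  obtain ⟨ij, hadm, hpoly, hcost⟩ := stmt14_general
    (X := {f | IsPolygonal f ℓ}) (Y := {f | IsPolygonal f (2 * ℓ)})
    (isCompact_Icc.image_of_continuousOn hP).isBounded
    (fun i hi => by simpa only [ht0, ht1] using ht.mapsTo_Icc hi)
    (fun _ => IsPolygonal.isBounded_image) (fun _ => IsPolygonal.isBounded_image)
    (fun i j hi hij hj hQ => (hσp i j hi hij.le hj
      (not_not.1 fun hD => hσpBot i j hi hij.le hj hD hQ)).imp_right And.left)
    hCpoly hCcost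
  exact ⟨ij, hadm, hpoly, hcost.mono (by linarith)⟩
end
end

section
/- Bound on the number of weight-doubling iterations: let k ≥ 1, N ≥ k and i ≥ 0 be real numbers. If k · 2^{i/k} ≤ N · e^{i/(2k)}, then i ≤ 4k · log₂(N/k). -/
/-!
Taking logarithms turns `k * b ^ x ≤ N * exp (c * x)` into `x ≤ log (N / k) / (log b - c)`. The
weight-doubling bounds are the case `b = 2`, `c = 1 / 2`, `x = i / k`, and the constant `4` works
because `log 2 > 2 / 3` means `log 2 / 4 < log 2 - 1 / 2`.
-/

open Set

noncomputable section

theorem le_log_div_sub_of_mul_rpow_le_mul_exp {b c k N x : ℝ} (hb : 0 < b) (hc : c < Real.log b)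
    (hk : 0 < k) (h : k * b ^ x ≤ N * Real.exp (c * x)) :
    x ≤ Real.log (N / k) / (Real.log b - c) := by
  have hexp : Real.exp (x * (Real.log b - c)) ≤ N / k := by
    calc Real.exp (x * (Real.log b - c)) = b ^ x / Real.exp (c * x) := by
          rw [Real.rpow_def_of_pos hb, ← Real.exp_sub]
          ring_nf
      _ ≤ N / k := by
          rwa [div_le_div_iff₀ (Real.exp_pos _) hk, mul_comm (b ^ x)]
  rw [le_div_iff₀ (sub_pos.mpr hc)]
  exact (Real.le_log_iff_exp_le ((Real.exp_pos _).trans_le hexp)).mpr hexp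

theorem log_two_div_four_lt_log_two_sub_half : Real.log 2 / 4 < Real.log 2 - 1 / 2 := by
  linarith [Real.log_two_gt_d9]

theorem stmt15_general {k N i : ℝ} (hk : 0 < k) (hN : k ≤ N)
    (h : k * (2 : ℝ) ^ (i / k) ≤ N * Real.exp (i / (2 * k))) :
    i ≤ 4 * k * Real.logb 2 (N / k) := by
  have hlog_two : 0 < Real.log 2 := Real.log_pos one_lt_two
  have hgap : Real.log 2 / 4 < Real.log 2 - 1 / 2 := log_two_div_four_lt_log_two_sub_half
  have hratio : 0 ≤ Real.log (N / k) := Real.log_nonneg ((one_le_div hk).mpr hN)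
  have hrate : i / (2 * k) = 1 / 2 * (i / k) := by ring
  have hdiv : i / k ≤ 4 * Real.logb 2 (N / k) := by
    calc i / k ≤ Real.log (N / k) / (Real.log 2 - 1 / 2) :=
          le_log_div_sub_of_mul_rpow_le_mul_exp two_pos (by linarith) hk (hrate ▸ h)
      _ ≤ Real.log (N / k) / (Real.log 2 / 4) :=
          div_le_div_of_nonneg_left hratio (by positivity) hgap.le
      _ = 4 * Real.logb 2 (N / k) := by
          rw [← Real.log_div_log]
          ring
  calc i ≤ 4 * Real.logb 2 (N / k) * k := (div_le_iff₀ hk).mp hdiv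
    _ = 4 * k * Real.logb 2 (N / k) := by ring

/-- Bound on the number of weight-doubling iterations. -/
theorem stmt15 (k N i : ℝ) (hk : 1 ≤ k) (hN : k ≤ N) (hi : 0 ≤ i)
    (h : k * (2:ℝ) ^ (i / k) ≤ N * Real.exp (i / (2 * k))) :
    i ≤ 4 * k * Real.logb 2 (N / k) :=
  stmt15_general (zero_lt_one.trans_le hk) hN h
end
end
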